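/- Let S : ℝ² → ℝ be real analytic and set P := ∂_x∂_y(∂_x−∂_y)S. Assume P is not identically zero near the origin, and let n ∈ ℕ be the order of vanishing of P at the origin, i.e. all partial derivatives of P of total order < n vanish at (0,0) while some partial derivative of total order n does not vanish at (0,0). Let a : ℝ² → ℂ be smooth, compactly supported, with a(0,0) ≠ 0. Then there exist a constant C' > 0 and λ₀ ≥ 1 such that for every λ ≥ λ₀ there exist nonzero functions f₁, f₂, f₃ ∈ L²(ℝ) with |Λ_S(f₁,f₂,f₃)| ≥ C' λ^{−1/(2(n+3))} ‖f₁‖_{L²} ‖f₂‖_{L²} ‖f₃‖_{L²}. -/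

import Mathlib

open MeasureTheory

noncomputable section

/-- Partial derivative in the first variable. -/
def pdx (f : ℝ × ℝ → ℝ) : ℝ × ℝ → ℝ := fun p => deriv (fun t => f (t, p.2)) p.1

/-- Partial derivative in the second variable. -/
def pdy (f : ℝ × ℝ → ℝ) : ℝ × ℝ → ℝ := fun p => deriv (fun t => f (p.1, t)) p.2

/-- The differential operator `DS = ∂ₓ∂_y(∂ₓ − ∂_y)S = S_xxy − S_xyy`. -/
def DOp (S : ℝ × ℝ → ℝ) : ℝ × ℝ → ℝ := pdx (pdy (fun p => pdx S p - pdy S p))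

open scoped ContDiff

lemma hasDerivAt_pdx {F : ℝ × ℝ → ℝ} (hF : ContDiff ℝ ∞ F) (x y : ℝ) :
    HasDerivAt (fun t => F (t, y)) (pdx F (x, y)) x := by
  have h : DifferentiableAt ℝ (fun t => F (t, y)) x := by
    have := hF.differentiable (by simp)
    fun_prop
  exact h.hasDerivAt

lemma hasDerivAt_pdy {F : ℝ × ℝ → ℝ} (hF : ContDiff ℝ ∞ F) (x y : ℝ) :
    HasDerivAt (fun t => F (x, t)) (pdy F (x, y)) y := by
  have h : DifferentiableAt ℝ (fun t => F (x, t)) y := by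
    have := hF.differentiable (by simp)
    fun_prop
  exact h.hasDerivAt

lemma pdx_eq {F : ℝ × ℝ → ℝ} (hF : ContDiff ℝ ∞ F) :
    pdx F = fun p => fderiv ℝ F p (1, 0) := by
  funext ⟨x, y⟩
  have h1 : HasFDerivAt F (fderiv ℝ F (x, y)) (x, y) :=
    (hF.differentiable (by simp) (x, y)).hasFDerivAt
  have h2 : HasDerivAt (fun t : ℝ => (t, y)) ((1 : ℝ), (0 : ℝ)) x :=
    (hasDerivAt_id x).prodMk (hasDerivAt_const x y)
  exact (hasDerivAt_pdx hF x y).unique (h1.comp_hasDerivAt x h2)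

lemma pdy_eq {F : ℝ × ℝ → ℝ} (hF : ContDiff ℝ ∞ F) :
    pdy F = fun p => fderiv ℝ F p (0, 1) := by
  funext ⟨x, y⟩
  have h1 : HasFDerivAt F (fderiv ℝ F (x, y)) (x, y) :=
    (hF.differentiable (by simp) (x, y)).hasFDerivAt
  have h2 : HasDerivAt (fun t : ℝ => (x, t)) ((0 : ℝ), (1 : ℝ)) y :=
    (hasDerivAt_const y x).prodMk (hasDerivAt_id y)
  exact (hasDerivAt_pdy hF x y).unique (h1.comp_hasDerivAt y h2)

lemma fderiv_smooth {F : ℝ × ℝ → ℝ} (hF : ContDiff ℝ ∞ F) : ContDiff ℝ ∞ (fderiv ℝ F) :=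
  hF.fderiv_right (by simp)

lemma smooth_pdx {F : ℝ × ℝ → ℝ} (hF : ContDiff ℝ ∞ F) : ContDiff ℝ ∞ (pdx F) := by
  rw [pdx_eq hF]
  exact (fderiv_smooth hF).clm_apply contDiff_const

lemma smooth_pdy {F : ℝ × ℝ → ℝ} (hF : ContDiff ℝ ∞ F) : ContDiff ℝ ∞ (pdy F) := by
  rw [pdy_eq hF]
  exact (fderiv_smooth hF).clm_apply contDiff_const

lemma pd_comm {F : ℝ × ℝ → ℝ} (hF : ContDiff ℝ ∞ F) : pdx (pdy F) = pdy (pdx F) := by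
  rw [pdx_eq (smooth_pdy hF), pdy_eq (smooth_pdx hF), pdx_eq hF, pdy_eq hF]
  funext p
  have hd : DifferentiableAt ℝ (fderiv ℝ F) p := (fderiv_smooth hF).differentiable (by simp) p
  have key : ∀ v w : ℝ × ℝ, fderiv ℝ (fun q => fderiv ℝ F q v) p w
      = fderiv ℝ (fderiv ℝ F) p w v := by
    intro v w
    rw [fderiv_clm_apply hd (differentiableAt_const v)]
    simp
  rw [key, key]
  have hs : IsSymmSndFDerivAt ℝ F p := by
    apply ContDiffAt.isSymmSndFDerivAt (n := ∞) hF.contDiffAt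
    rw [minSmoothness_of_isRCLikeNormedField]
    exact WithTop.coe_le_coe.2 le_top
  exact hs.eq _ _

lemma mv_bound {f f' : ℝ → ℝ} {C x : ℝ} (hf : ∀ t, HasDerivAt f (f' t) t)
    (hb : ∀ t, |t| ≤ |x| → |f' t| ≤ C) : |f x - f 0| ≤ C * |x| := by
  have h := Convex.norm_image_sub_le_of_norm_hasDerivWithin_le (f := f) (f' := f') (C := C)
    (s := Set.Icc (-|x|) |x|) (x := 0) (y := x) (fun t _ => (hf t).hasDerivWithinAt)
    (fun t ht => hb t (abs_le.2 ht)) (convex_Icc _ _) (by simp)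
    ⟨neg_abs_le x, le_abs_self x⟩
  simpa using h

lemma vanish_x (n : ℕ) : ∀ F : ℝ × ℝ → ℝ, ContDiff ℝ ∞ F →
    (∀ i < n, (pdx^[i] F) (0, 0) = 0) →
    ∃ C ≥ 0, ∀ x : ℝ, |x| ≤ 1 → |F (x, 0)| ≤ C * |x| ^ n := by
  induction n with
  | zero =>
    intro F hF _
    obtain ⟨C, hC⟩ := (isCompact_Icc (a := (-1 : ℝ)) (b := 1)).exists_bound_of_continuousOn
      (f := fun x => F (x, 0)) (by have := hF.continuous; fun_prop)
    refine ⟨|C|, abs_nonneg _, fun x hx => ?_⟩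
    simpa using (hC x (abs_le.1 hx)).trans (le_abs_self C)
  | succ n ih =>
    intro F hF h
    obtain ⟨C, hC0, hC⟩ := ih (pdx F) (smooth_pdx hF) (fun i hi => by
      simpa using h (i + 1) (by omega))
    refine ⟨C, hC0, fun x hx => ?_⟩
    have h0 : F (0, 0) = 0 := by simpa using h 0 (by omega)
    have := mv_bound (f := fun t => F (t, 0)) (f' := fun t => pdx F (t, 0)) (C := C * |x| ^ n)
      (x := x) (fun t => hasDerivAt_pdx hF t 0) (fun t ht => by
        refine (hC t (ht.trans hx)).trans ?_
        gcongr)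
    simp only [h0, sub_zero] at this
    rw [pow_succ, ← mul_assoc]; exact this

lemma vanish_xy (n : ℕ) : ∀ F : ℝ × ℝ → ℝ, ContDiff ℝ ∞ F →
    (∀ i j, i + j < n → (pdx^[i] (pdy^[j] F)) (0, 0) = 0) →
    ∃ C ≥ 0, ∀ r ≤ (1 : ℝ), ∀ x y : ℝ, |x| ≤ r → |y| ≤ r → |F (x, y)| ≤ C * r ^ n := by
  induction n with
  | zero =>
    intro F hF _
    obtain ⟨C, hC⟩ := ((isCompact_Icc (a := (-1 : ℝ)) (b := 1)).prod
      (isCompact_Icc (a := (-1 : ℝ)) (b := 1))).exists_bound_of_continuousOn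
      (f := F) (hF.continuous.continuousOn)
    refine ⟨|C|, abs_nonneg _, fun r hr x y hx hy => ?_⟩
    simpa using (hC (x, y) ⟨abs_le.1 (hx.trans hr), abs_le.1 (hy.trans hr)⟩).trans (le_abs_self C)
  | succ n ih =>
    intro F hF h
    obtain ⟨C, hC0, hC⟩ := ih (pdy F) (smooth_pdy hF) (fun i j hi => by
      simpa using h i (j + 1) (by omega))
    obtain ⟨D, hD0, hD⟩ := vanish_x (n + 1) F hF (fun i hi => by
      simpa using h i 0 (by omega))
    refine ⟨C + D, by positivity, fun r hr x y hx hy => ?_⟩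
    have hr0 : 0 ≤ r := (abs_nonneg x).trans hx
    have h1 := mv_bound (f := fun t => F (x, t)) (f' := fun t => pdy F (x, t)) (C := C * r ^ n)
      (x := y) (fun t => hasDerivAt_pdy hF x t) (fun t ht => hC r hr x t hx (ht.trans hy))
    have h2 := hD x (hx.trans hr)
    have h3 : D * |x| ^ (n + 1) ≤ D * r ^ (n + 1) := by gcongr
    have h4 : C * r ^ n * |y| ≤ C * r ^ n * r := by gcongr
    have h5 : |F (x, y)| ≤ |F (x, y) - F (x, 0)| + |F (x, 0)| := by
      simpa using abs_add_le (F (x, y) - F (x, 0)) (F (x, 0))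
    calc _ ≤ _ := h5
      _ ≤ C * r ^ n * r + D * r ^ (n + 1) := by linarith
      _ = _ := by ring

lemma phase_decomp (S : ℝ × ℝ → ℝ) (hS : ContDiff ℝ ∞ S) (n : ℕ)
    (hvan : ∀ i j : ℕ, i + j < n → (pdx^[i] (pdy^[j] (DOp S))) (0, 0) = 0) :
    ∃ g₁ g₂ g₃ : ℝ → ℝ, Continuous g₁ ∧ Continuous g₂ ∧ Continuous g₃ ∧
      ∃ C ≥ 0, ∀ r ≤ (1 / 3 : ℝ), ∀ x y : ℝ, |x| ≤ r → |y| ≤ r →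
        |S (x, y) - g₁ x - g₂ y - g₃ (x + y)| ≤ C * r ^ (n + 3) := by
  have hSx := smooth_pdx hS
  have hSy := smooth_pdy hS
  have hP : ContDiff ℝ ∞ (DOp S) := smooth_pdx (smooth_pdy (hSx.sub hSy))
  obtain ⟨C, hC0, hC⟩ := vanish_xy n (DOp S) hP hvan
  set Q := pdx (pdy S) with hQdef
  have hQ : ContDiff ℝ ∞ Q := smooth_pdx hSy
  have hDQ : ∀ p, DOp S p = pdx Q p - pdy Q p := by
    intro p
    have e1 : pdy (fun p => pdx S p - pdy S p) = fun p => pdy (pdx S) p - pdy (pdy S) p := by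
      funext ⟨x, y⟩
      exact (hasDerivAt_pdy (hSx.sub hSy) x y).unique
        ((hasDerivAt_pdy hSx x y).sub (hasDerivAt_pdy hSy x y))
    have e2 : DOp S p = pdx (pdy (pdx S)) p - pdx (pdy (pdy S)) p := by
      obtain ⟨x, y⟩ := p
      unfold DOp
      rw [e1]
      exact (hasDerivAt_pdx ((smooth_pdy hSx).sub (smooth_pdy hSy)) x y).unique
        ((hasDerivAt_pdx (smooth_pdy hSx) x y).sub (hasDerivAt_pdx (smooth_pdy hSy) x y))
    rw [e2, ← pd_comm hS, pd_comm hSy]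
  let h : ℝ → ℝ := fun u => Q (0, u)
  have hh : Continuous h := by have := hQ.continuous; fun_prop
  let H1 : ℝ → ℝ := fun u => ∫ t in (0 : ℝ)..u, h t
  have hH1 : ∀ u, HasDerivAt H1 (h u) u := fun u =>
    intervalIntegral.integral_hasDerivAt_right (hh.intervalIntegrable _ _)
      hh.stronglyMeasurable.stronglyMeasurableAtFilter hh.continuousAt
  have cH1 : Continuous H1 := continuous_iff_continuousAt.2 fun u => (hH1 u).continuousAt
  let H : ℝ → ℝ := fun u => ∫ t in (0 : ℝ)..u, H1 t
  have hH : ∀ u, HasDerivAt H (H1 u) u := fun u =>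
    intervalIntegral.integral_hasDerivAt_right (cH1.intervalIntegrable _ _)
      cH1.stronglyMeasurable.stronglyMeasurableAtFilter cH1.continuousAt
  have cH : Continuous H := continuous_iff_continuousAt.2 fun u => (hH u).continuousAt
  have cS := hS.continuous
  refine ⟨fun x => S (x, 0) - H x, fun y => S (0, y) - S (0, 0) - H y + H 0, H,
    by fun_prop, by fun_prop, cH, C * 3 ^ n, by positivity, ?_⟩
  intro r hr x y hx hy
  have hr0 : 0 ≤ r := (abs_nonneg x).trans hx
  have hE : ∀ s t, |s| ≤ r → |t| ≤ r → |Q (s, t) - h (s + t)| ≤ C * (3 * r) ^ n * r := by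
    intro s t hs ht
    have := mv_bound (f := fun v => Q (v, s + t - v)) (f' := fun v => DOp S (v, s + t - v))
      (C := C * (3 * r) ^ n) (x := s) (fun v => by
        have h1 : HasFDerivAt Q (fderiv ℝ Q (v, s + t - v)) (v, s + t - v) :=
          (hQ.differentiable (by simp) _).hasFDerivAt
        have h2 : HasDerivAt (fun v : ℝ => (v, s + t - v)) ((1 : ℝ), (-1 : ℝ)) v :=
          (hasDerivAt_id v).prodMk (by simpa using (hasDerivAt_id v).const_sub (s + t))
        have h3 := h1.comp_hasDerivAt v h2
        have h4 : DOp S (v, s + t - v) = fderiv ℝ Q (v, s + t - v) (1, -1) := by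
          rw [hDQ, pdx_eq hQ, pdy_eq hQ]
          simp only
          rw [← map_sub]; simp
        rw [h4]
        exact h3) (fun v hv => by
        refine hC (3 * r) (by linarith) _ _ (by linarith) ?_
        have hv' := abs_le.1 (hv.trans hs)
        rw [abs_le] at hs ht ⊢
        constructor <;> linarith [hs.1, hs.2, ht.1, ht.2, hv'.1, hv'.2])
    simp only [add_sub_cancel_left, sub_zero] at this
    refine this.trans ?_
    gcongr
  have hRy : ∀ t, |t| ≤ r → |pdy S (x, t) - pdy S (0, t) - (H1 (x + t) - H1 t)|
      ≤ C * (3 * r) ^ n * r * r := by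
    intro t ht
    have := mv_bound (f := fun s => pdy S (s, t) - H1 (s + t))
      (f' := fun s => Q (s, t) - h (s + t)) (C := C * (3 * r) ^ n * r) (x := x)
      (fun s => (hasDerivAt_pdx hSy s t).sub ((hH1 (s + t)).comp_add_const s t))
      (fun s hs => hE s t (hs.trans hx) ht)
    simp only [zero_add] at this
    calc _ = |pdy S (x, t) - H1 (x + t) - (pdy S (0, t) - H1 t)| := by congr 1; ring
      _ ≤ _ := this
      _ ≤ _ := by gcongr
  have := mv_bound (f := fun t => S (x, t) - S (0, t) - (H (x + t) - H t))
      (f' := fun t => pdy S (x, t) - pdy S (0, t) - (H1 (x + t) - H1 t))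
      (C := C * (3 * r) ^ n * r * r) (x := y)
      (fun t => ((hasDerivAt_pdy hS x t).sub (hasDerivAt_pdy hS 0 t)).sub
        (((hH (x + t)).comp_const_add x t).sub (hH t)))
      (fun t ht => hRy t (ht.trans hy))
  simp only [add_zero] at this
  calc _ = |S (x, y) - S (0, y) - (H (x + y) - H y) - (S (x, 0) - S (0, 0) - (H x - H 0))| := by
        congr 1; ring
    _ ≤ _ := this
    _ ≤ C * (3 * r) ^ n * r * r * r := by gcongr
    _ = _ := by ring

lemma test_fun (lam : ℝ) (g : ℝ → ℝ) (hg : Continuous g) (δ : ℝ) (hδ : 0 < δ) :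
    ∃ f : Lp ℂ 2 (volume : Measure ℝ),
      (f =ᵐ[volume] (Set.Icc (-δ) δ).indicator (fun x => Complex.exp (-(Complex.I * lam * g x)))) ∧
      ‖f‖ = √(2 * δ) := by
  set u : ℝ → ℂ := fun x => Complex.exp (-(Complex.I * lam * g x)) with hu
  have hum : Measurable u := by
    have : Continuous u := by fun_prop
    exact this.measurable
  have hnorm : ∀ x, ‖u x‖ = 1 := by
    intro x
    rw [hu]
    have : -(Complex.I * lam * g x) = ((-(lam * g x) : ℝ) : ℂ) * Complex.I := by
      push_cast; ring
    simp only [this]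
    exact Complex.norm_exp_ofReal_mul_I _
  have he : eLpNorm ((Set.Icc (-δ) δ).indicator u) 2 volume = ENNReal.ofReal (√(2 * δ)) := by
    have : eLpNorm ((Set.Icc (-δ) δ).indicator u) 2 volume
        = eLpNorm ((Set.Icc (-δ) δ).indicator (fun _ => (1 : ℝ))) 2 volume := by
      apply eLpNorm_congr_norm_ae
      refine Filter.Eventually.of_forall fun x => ?_
      by_cases hx : x ∈ Set.Icc (-δ) δ <;> simp [hx, hnorm]
    rw [this, eLpNorm_indicator_const measurableSet_Icc (by simp) (by simp), Real.volume_Icc,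
      Real.sqrt_eq_rpow, ← ENNReal.ofReal_rpow_of_pos (by positivity)]
    rw [show δ - -δ = 2 * δ by ring]
    simp
  have hm : MemLp ((Set.Icc (-δ) δ).indicator u) 2 volume :=
    ⟨(hum.indicator measurableSet_Icc).aestronglyMeasurable, by rw [he]; exact ENNReal.ofReal_lt_top⟩
  refine ⟨hm.toLp _, hm.coeFn_toLp, ?_⟩
  rw [Lp.norm_toLp, he, ENNReal.toReal_ofReal (by positivity)]

lemma key_bound (S R : ℝ × ℝ → ℝ) (a : ℝ × ℝ → ℂ) (hSc : Continuous S) (ha : Continuous a)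
    (lam δ : ℝ) (hδ : 0 < δ)
    (g₁ g₂ g₃ : ℝ → ℝ) (h₁ : Continuous g₁) (h₂ : Continuous g₂) (h₃ : Continuous g₃)
    (hR : ∀ x y, S (x, y) = g₁ x + g₂ y + g₃ (x + y) + R (x, y))
    (hRb : ∀ x y, |x| ≤ δ → |y| ≤ δ → |lam * R (x, y)| ≤ 1 / 4)
    (hab : ∀ x y, |x| ≤ δ → |y| ≤ δ → ‖a (x, y) - a (0, 0)‖ ≤ ‖a (0, 0)‖ / 4) :
    ∃ f₁ f₂ f₃ : Lp ℂ 2 (volume : Measure ℝ),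
      ‖f₁‖ = √(2 * δ) ∧ ‖f₂‖ = √(2 * δ) ∧ ‖f₃‖ = √(2 * (2 * δ)) ∧
      2 * δ ^ 2 * ‖a (0, 0)‖ ≤ ‖∫ p : ℝ × ℝ, Complex.exp (Complex.I * lam * S p) *
              f₁ p.1 * f₂ p.2 * f₃ (p.1 + p.2) * a p‖ := by
  obtain ⟨f₁, e₁, n₁⟩ := test_fun lam g₁ h₁ δ hδ
  obtain ⟨f₂, e₂, n₂⟩ := test_fun lam g₂ h₂ δ hδ
  obtain ⟨f₃, e₃, n₃⟩ := test_fun lam g₃ h₃ (2 * δ) (by positivity)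
  refine ⟨f₁, f₂, f₃, n₁, n₂, n₃, ?_⟩
  have q₁ : Measure.QuasiMeasurePreserving (Prod.fst : ℝ × ℝ → ℝ) volume volume :=
    Measure.quasiMeasurePreserving_fst
  have q₂ : Measure.QuasiMeasurePreserving (Prod.snd : ℝ × ℝ → ℝ) volume volume :=
    Measure.quasiMeasurePreserving_snd
  have q₃ : Measure.QuasiMeasurePreserving (fun p : ℝ × ℝ => p.1 + p.2) volume volume :=
    q₂.comp (measurePreserving_prod_add (volume : Measure ℝ) volume).quasiMeasurePreserving
  set B : Set (ℝ × ℝ) := Set.Icc (-δ) δ ×ˢ Set.Icc (-δ) δ with hB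
  have hBm : MeasurableSet B := measurableSet_Icc.prod measurableSet_Icc
  have hBv : volume B = ENNReal.ofReal (4 * δ ^ 2) := by
    rw [hB, Measure.volume_eq_prod, Measure.prod_prod, Real.volume_Icc,
      ← ENNReal.ofReal_mul (by linarith)]
    congr 1; ring
  have hBr : volume.real B = 4 * δ ^ 2 := by
    rw [Measure.real, hBv, ENNReal.toReal_ofReal (by positivity)]
  set G : ℝ × ℝ → ℂ := fun p => Complex.exp (Complex.I * (lam * R p : ℝ)) * a p with hG
  have hint : (∫ p : ℝ × ℝ, Complex.exp (Complex.I * lam * S p) *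
              f₁ p.1 * f₂ p.2 * f₃ (p.1 + p.2) * a p) = ∫ p in B, G p := by
    rw [← integral_indicator hBm]
    apply integral_congr_ae
    filter_upwards [q₁.ae e₁, q₂.ae e₂, q₃.ae e₃] with p k₁ k₂ k₃
    rw [k₁, k₂, k₃]
    obtain ⟨x, y⟩ := p
    by_cases hx : x ∈ Set.Icc (-δ) δ
    · by_cases hy : y ∈ Set.Icc (-δ) δ
      · have hxy : x + y ∈ Set.Icc (-(2 * δ)) (2 * δ) := by
          constructor <;> linarith [hx.1, hx.2, hy.1, hy.2]
        have hp : (x, y) ∈ B := ⟨hx, hy⟩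
        rw [Set.indicator_of_mem hp]
        simp only [Set.indicator_of_mem hx, Set.indicator_of_mem hy, Set.indicator_of_mem hxy, hG]
        rw [← Complex.exp_add, ← Complex.exp_add, ← Complex.exp_add, hR x y]
        congr 2
        push_cast
        ring
      · have hp : (x, y) ∉ B := fun h => hy h.2
        rw [Set.indicator_of_notMem hp]
        simp [Set.indicator_of_notMem hy]
    · have hp : (x, y) ∉ B := fun h => hx h.1
      rw [Set.indicator_of_notMem hp]
      simp [Set.indicator_of_notMem hx]
  rw [hint]
  have hRc : Continuous R := by
    have : R = fun p => S p - g₁ p.1 - g₂ p.2 - g₃ (p.1 + p.2) := by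
      funext ⟨x, y⟩
      simp only [hR x y]; ring
    rw [this]; fun_prop
  have hGc : Continuous G := by fun_prop
  have hGi : IntegrableOn G B := hGc.continuousOn.integrableOn_compact
    (isCompact_Icc.prod isCompact_Icc)
  have hci : IntegrableOn (fun _ : ℝ × ℝ => a (0, 0)) B :=
    integrableOn_const (by rw [hBv]; exact ENNReal.ofReal_ne_top)
  have hpt : ∀ p ∈ B, ‖G p - a (0, 0)‖ ≤ ‖a (0, 0)‖ / 2 := by
    rintro ⟨x, y⟩ ⟨hx, hy⟩
    have hx' : |x| ≤ δ := abs_le.2 hx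
    have hy' : |y| ≤ δ := abs_le.2 hy
    have b1 := hRb x y hx' hy'
    have b2 := hab x y hx' hy'
    have b3 : ‖Complex.exp (Complex.I * (lam * R (x, y) : ℝ)) - 1‖ ≤ 1 / 4 :=
      (Real.norm_exp_I_mul_ofReal_sub_one_le).trans b1
    have b4 : ‖Complex.exp (Complex.I * (lam * R (x, y) : ℝ))‖ = 1 := by
      rw [mul_comm]; exact Complex.norm_exp_ofReal_mul_I _
    have : G (x, y) - a (0, 0) =
        Complex.exp (Complex.I * (lam * R (x, y) : ℝ)) * (a (x, y) - a (0, 0)) +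
        (Complex.exp (Complex.I * (lam * R (x, y) : ℝ)) - 1) * a (0, 0) := by
      simp only [hG]; ring
    rw [this]
    refine (norm_add_le _ _).trans ?_
    rw [norm_mul, norm_mul, b4]
    nlinarith [norm_nonneg (a (0, 0))]
  have hd : ‖∫ p in B, (G p - a (0, 0))‖ ≤ ‖a (0, 0)‖ / 2 * volume.real B :=
    norm_setIntegral_le_of_norm_le_const (by rw [hBv]; exact ENNReal.ofReal_lt_top) hpt
  rw [integral_sub hGi hci, setIntegral_const, hBr] at hd
  have hn : ‖(4 * δ ^ 2) • a (0, 0)‖ = 4 * δ ^ 2 * ‖a (0, 0)‖ := by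
    rw [norm_smul, Real.norm_of_nonneg (by positivity)]
  have := norm_sub_norm_le ((4 * δ ^ 2) • a (0, 0)) (∫ p in B, G p)
  rw [norm_sub_rev, hn] at this
  linarith

/-- Sharpness of the decay exponent `1/(2(n+3))` in the main
theorem: a matching lower bound for suitable test functions. -/
theorem trilinear_sharp_lower_bound
    (S : ℝ × ℝ → ℝ) (hS : ∀ p : ℝ × ℝ, AnalyticAt ℝ S p)
    (hPnz : ∀ ε > (0 : ℝ), ∃ p : ℝ × ℝ, ‖p‖ < ε ∧ DOp S p ≠ 0)
    (n : ℕ)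
    (hvan : ∀ i j : ℕ, i + j < n → (pdx^[i] (pdy^[j] (DOp S))) (0, 0) = 0)
    (hnonvan : ∃ i j : ℕ, i + j = n ∧ (pdx^[i] (pdy^[j] (DOp S))) (0, 0) ≠ 0)
    (a : ℝ × ℝ → ℂ) (ha : ContDiff ℝ (⊤ : ℕ∞) a) (hacs : HasCompactSupport a)
    (ha0 : a (0, 0) ≠ 0) :
    ∃ C' > (0 : ℝ), ∃ lam₀ : ℝ, 1 ≤ lam₀ ∧
      ∀ lam : ℝ, lam₀ ≤ lam →
        ∃ f₁ f₂ f₃ : Lp ℂ 2 (volume : Measure ℝ),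
          f₁ ≠ 0 ∧ f₂ ≠ 0 ∧ f₃ ≠ 0 ∧
          C' * lam ^ (-(1 / (2 * ((n : ℝ) + 3)))) * ‖f₁‖ * ‖f₂‖ * ‖f₃‖ ≤
            ‖∫ p : ℝ × ℝ, Complex.exp (Complex.I * lam * S p) *
              f₁ p.1 * f₂ p.2 * f₃ (p.1 + p.2) * a p‖ := by
  have hSω : ContDiff ℝ ∞ S := contDiff_iff_contDiffAt.2 fun p => (hS p).contDiffAt
  obtain ⟨g₁, g₂, g₃, h₁, h₂, h₃, C, hC0, hC⟩ := phase_decomp S hSω n hvan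
  have hapos : 0 < ‖a (0, 0)‖ := norm_pos_iff.2 ha0
  obtain ⟨ε, hε, hεa⟩ := Metric.continuousAt_iff.1 (ha.continuous.continuousAt (x := (0, 0)))
    (‖a (0, 0)‖ / 4) (by positivity)
  set c : ℝ := 1 / (4 * (C + 1)) with hc
  have hcpos : 0 < c := by positivity
  have hc1 : c ≤ 1 := by
    rw [hc, div_le_one (by positivity)]; linarith
  have hcC : c * C ≤ 1 / 4 := by
    rw [hc]; field_simp; linarith
  have hn3 : (0 : ℝ) < (n : ℝ) + 3 := by positivity
  have hlim : Filter.Tendsto (fun lam : ℝ => c * lam ^ (-(1 / ((n : ℝ) + 3)))) Filter.atTop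
      (nhds 0) := by
    simpa using (tendsto_rpow_neg_atTop (y := 1 / ((n : ℝ) + 3)) (by positivity)).const_mul c
  have hev := hlim.eventually (gt_mem_nhds (show (0 : ℝ) < min (1 / 3) ε by positivity))
  obtain ⟨L, hL⟩ := Filter.eventually_atTop.1 hev
  refine ⟨‖a (0, 0)‖ * √c / 2, by positivity, max 1 L, le_max_left _ _, fun lam hlam => ?_⟩
  have hlam1 : 1 ≤ lam := (le_max_left _ _).trans hlam
  have hlam0 : 0 < lam := by linarith
  have hδlt := hL lam ((le_max_right _ _).trans hlam)
  set δ : ℝ := c * lam ^ (-(1 / ((n : ℝ) + 3))) with hδdef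
  have hδ : 0 < δ := by positivity
  have hδ1 : δ ≤ 1 / 3 := hδlt.le.trans (min_le_left _ _)
  have hδε : δ < ε := hδlt.trans_le (min_le_right _ _)
  have hδpow : lam * δ ^ (n + 3) = c ^ (n + 3) := by
    rw [hδdef, mul_pow, ← Real.rpow_natCast (lam ^ _), ← Real.rpow_mul hlam0.le]
    have : -(1 / ((n : ℝ) + 3)) * ((n + 3 : ℕ) : ℝ) = -1 := by
      push_cast; field_simp
    rw [this, Real.rpow_neg_one]
    field_simp
  obtain ⟨f₁, f₂, f₃, n₁, n₂, n₃, hb⟩ := key_bound S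
    (fun p => S p - g₁ p.1 - g₂ p.2 - g₃ (p.1 + p.2)) a hSω.continuous ha.continuous lam δ hδ
    g₁ g₂ g₃ h₁ h₂ h₃ (fun x y => by simp only; ring)
    (fun x y hx hy => by
      have := hC δ hδ1 x y hx hy
      rw [abs_mul, abs_of_pos hlam0]
      calc _ ≤ lam * (C * δ ^ (n + 3)) := by gcongr
        _ = C * c ^ (n + 3) := by rw [← hδpow]; ring
        _ ≤ C * c := by
          gcongr
          exact pow_le_of_le_one hcpos.le hc1 (by omega)
        _ ≤ _ := by linarith)
    (fun x y hx hy => by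
      have : dist (x, y) ((0 : ℝ), (0 : ℝ)) < ε := by
        rw [Prod.dist_eq]
        simpa using ⟨hx.trans_lt hδε, hy.trans_lt hδε⟩
      have := hεa this
      rw [dist_eq_norm] at this
      exact this.le)
  have p₁ : 0 < √(2 * δ) := by positivity
  have p₃ : 0 < √(2 * (2 * δ)) := by positivity
  refine ⟨f₁, f₂, f₃, norm_pos_iff.1 (n₁ ▸ p₁), norm_pos_iff.1 (n₂ ▸ p₁),
    norm_pos_iff.1 (n₃ ▸ p₃), le_trans (le_of_eq ?_) hb⟩
  rw [n₁, n₂, n₃]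
  have hs : √δ = √c * lam ^ (-(1 / (2 * ((n : ℝ) + 3)))) := by
    rw [hδdef, Real.sqrt_mul hcpos.le, Real.sqrt_eq_rpow (lam ^ _), ← Real.rpow_mul hlam0.le]
    congr 2
    field_simp
  have e4 : √(2 * (2 * δ)) = 2 * √δ := by
    rw [← mul_assoc, Real.sqrt_mul (by norm_num), show (2 : ℝ) * 2 = 2 ^ 2 by norm_num,
      Real.sqrt_sq (by norm_num)]
  have e2 : √(2 * δ) * √(2 * δ) = 2 * δ := Real.mul_self_sqrt (by positivity)
  have e1 : √δ * √δ = δ := Real.mul_self_sqrt hδ.le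
  calc _ = ‖a (0, 0)‖ / 2 * (√c * lam ^ (-(1 / (2 * ((n : ℝ) + 3))))) *
        (√(2 * δ) * √(2 * δ)) * √(2 * (2 * δ)) := by ring
    _ = 2 * δ * ‖a (0, 0)‖ * (√δ * √δ) := by rw [← hs, e2, e4]; ring
    _ = _ := by rw [e1]; ring
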